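/- Let 0 < α < β, 1 < p < ∞, and define q by p/q = 1 - α/β. Then for all f in the Sobolev space W^{α,p}(ℝ^d) ∩ B^{α-β,∞}_∞(ℝ^d), the improved Sobolev inequality ‖f‖_{L^q} ≤ C (‖f‖_{W^{α,p}})^{1-α/β} (‖f‖_{B^{α-β,∞}_∞})^{α/β} holds with C depending only on α, β, p, d. -/

import Mathlib

open MeasureTheory FourierTransform SchwartzMap
open scoped ENNReal Real

/-- Littlewood–Paley block: for `j = 0` this is the low-frequency block `Δ_{-1} = S₀`
(Fourier multiplier `φ`), and for `j ≥ 1` it is the dyadic block `Δ_{j-1}` with multiplier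
`ψ(ξ/2^{j-1}) = φ(ξ/2^j) - φ(ξ/2^{j-1})`, where `φ ∈ C_c^∞` equals `1` near the origin. -/
noncomputable def LPblock {d : ℕ} (φ : EuclideanSpace ℝ (Fin d) → ℝ) (j : ℕ)
    (f : EuclideanSpace ℝ (Fin d) → ℂ) : EuclideanSpace ℝ (Fin d) → ℂ :=
  if j = 0 then 𝓕⁻ (fun ξ => (φ ξ : ℂ) * 𝓕 f ξ)
  else 𝓕⁻ (fun ξ =>
    ((φ ((2 : ℝ) ^ (-(j : ℝ)) • ξ) - φ ((2 : ℝ) ^ (-(j : ℝ) + 1) • ξ) : ℝ) : ℂ) * 𝓕 f ξ)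

/-- The Besov norm `‖f‖_{B^{s,∞}_q} = sup_{j ≥ -1} 2^{js} ‖Δ_j f‖_{L^q}` (blocks reindexed
by `j : ℕ`, `j` standing for the dyadic index `j - 1`). -/
noncomputable def besovNorm {d : ℕ} (φ : EuclideanSpace ℝ (Fin d) → ℝ) (s : ℝ) (q : ℝ≥0∞)
    (f : EuclideanSpace ℝ (Fin d) → ℂ) : ℝ≥0∞ :=
  ⨆ j : ℕ, ENNReal.ofReal ((2 : ℝ) ^ (((j : ℝ) - 1) * s)) * eLpNorm (LPblock φ j f) q volume

/-- The nonhomogeneous Sobolev (Bessel potential) norm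
`‖f‖_{W^{α,p}} = ‖(I - Δ)^{α/2} f‖_{L^p}`, via the Fourier multiplier `(1+|ξ|²)^{α/2}`. -/
noncomputable def besselNorm {d : ℕ} (α p : ℝ) (f : EuclideanSpace ℝ (Fin d) → ℂ) : ℝ≥0∞ :=
  eLpNorm (𝓕⁻ fun ξ => (((1 + ‖ξ‖ ^ 2) ^ (α / 2) : ℝ) : ℂ) * 𝓕 f ξ)
    (ENNReal.ofReal p) volume

/-!
Write `f = ∑ Δ_j f` and `g = (I - Δ)^{α/2} f`. The block `Δ_j f` is the convolution of `g` with
`2^{-jα}` times an approximate identity at scale `2^{-j}`, so it is bounded pointwise by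
`C 2^{-jα} M g`, where `M` is the Hardy–Littlewood maximal function. By definition of the Besov norm
`B = ‖f‖_{B^{α-β,∞}_∞}` it is also at most `C 2^{j(β-α)} B`. Using the second bound for small `j`
and the first for large `j`, and summing the two geometric series, gives the pointwise inequality
`|f| ≤ C (M g)^{1-α/β} B^{α/β}`. Its `L^q` norm is governed by the `L^p` norm of `M g`, since
`(1 - α/β) q = p`, and the maximal theorem in `L^p` concludes.
-/

open Metric Set Filter Topology
open scoped NNReal

section MaximalFunction

variable {X : Type*} [PseudoMetricSpace X] [MeasurableSpace X] {μ : Measure X}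

/-- The uncentred Hardy–Littlewood maximal function of `h` at `x`: the supremum of the averages
of `h` over the balls containing `x`. Open balls make it lower semicontinuous. -/
noncomputable def maximalFunction (μ : Measure X) (h : X → ℝ≥0∞) (x : X) : ℝ≥0∞ :=
  ⨆ (c : X) (r : ℝ) (_ : x ∈ ball c r), ⨍⁻ y in ball c r, h y ∂μ

theorem lt_maximalFunction_iff {h : X → ℝ≥0∞} {x : X} {t : ℝ≥0∞} :
    t < maximalFunction μ h x ↔ ∃ c r, x ∈ ball c r ∧ t < ⨍⁻ y in ball c r, h y ∂μ := by
  simp only [maximalFunction, lt_iSup_iff, exists_prop]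

theorem setLAverage_ball_le_maximalFunction (h : X → ℝ≥0∞) {c x : X} {r : ℝ}
    (hx : x ∈ ball c r) : ⨍⁻ y in ball c r, h y ∂μ ≤ maximalFunction μ h x :=
  le_of_forall_lt fun _ ht => lt_maximalFunction_iff.2 ⟨c, r, hx, ht⟩

theorem lowerSemicontinuous_maximalFunction (h : X → ℝ≥0∞) :
    LowerSemicontinuous (maximalFunction μ h) := by
  intro x t ht
  obtain ⟨c, r, hx, hcr⟩ := lt_maximalFunction_iff.1 ht
  filter_upwards [isOpen_ball.mem_nhds hx] with y hy
  exact lt_maximalFunction_iff.2 ⟨c, r, hy, hcr⟩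

theorem measurable_maximalFunction [OpensMeasurableSpace X] (h : X → ℝ≥0∞) :
    Measurable (maximalFunction μ h) :=
  (lowerSemicontinuous_maximalFunction h).measurable

theorem maximalFunction_le_add {h k : X → ℝ≥0∞} {t : ℝ≥0∞} (hhk : ∀ x, h x ≤ k x + t) (x : X) :
    maximalFunction μ h x ≤ maximalFunction μ k x + t := by
  refine iSup_le fun c => iSup_le fun r => iSup_le fun hx => ?_
  calc ⨍⁻ y in ball c r, h y ∂μ
      ≤ (μ (ball c r))⁻¹ * ∫⁻ y in ball c r, (k y + t) ∂μ := by
        rw [setLAverage_eq, ENNReal.div_eq_inv_mul]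
        gcongr
        exact hhk _
    _ = ⨍⁻ y in ball c r, k y ∂μ + (μ (ball c r))⁻¹ * μ (ball c r) * t := by
        rw [lintegral_add_right _ measurable_const, setLIntegral_const, setLAverage_eq,
          ENNReal.div_eq_inv_mul]
        ring
    _ ≤ maximalFunction μ k x + t := by
        gcongr
        · exact setLAverage_ball_le_maximalFunction k hx
        · exact mul_le_of_le_one_left' (ENNReal.inv_mul_le_one _)

theorem mul_measure_biUnion_ball_le [OpensMeasurableSpace X] [SecondCountableTopology X]
    {A : ℝ≥0} (hμ : ∀ c r, 0 < r → μ (closedBall c (5 * r)) ≤ A * μ (ball c r))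
    {h : X → ℝ≥0∞} {t : ℝ≥0∞} {T : Set (X × ℝ)} {R : ℝ} (hpos : ∀ b ∈ T, 0 < b.2)
    (hR : ∀ b ∈ T, b.2 ≤ R)
    (hT : ∀ b ∈ T, t * μ (ball b.1 b.2) ≤ ∫⁻ y in ball b.1 b.2, h y ∂μ) :
    t * μ (⋃ b ∈ T, ball b.1 b.2) ≤ A * ∫⁻ y, h y ∂μ := by
  obtain ⟨u, huT, hdisj, hcover⟩ :=
    Vitali.exists_disjoint_subfamily_covering_enlargement_closedBall
      T Prod.fst Prod.snd R hR 5 (by norm_num)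
  have hdisj_ball : u.PairwiseDisjoint fun b => ball b.1 b.2 := fun a ha b hb hab =>
    (hdisj ha hb hab).mono ball_subset_closedBall ball_subset_closedBall
  have hu : u.Countable := hdisj_ball.countable_of_isOpen (fun _ _ => isOpen_ball)
    fun b hb => nonempty_ball.2 (hpos b (huT hb))
  have hsub : ⋃ b ∈ T, ball b.1 b.2 ⊆ ⋃ b ∈ u, closedBall b.1 (5 * b.2) :=
    iUnion₂_subset fun b hb =>
      let ⟨c, hc, hbc⟩ := hcover b hb
      (ball_subset_closedBall.trans hbc).trans (subset_biUnion_of_mem (u := fun b : X × ℝ =>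
        closedBall b.1 (5 * b.2)) hc)
  calc t * μ (⋃ b ∈ T, ball b.1 b.2)
      ≤ t * ∑' b : u, μ (closedBall b.1.1 (5 * b.1.2)) := by
        gcongr
        exact (measure_mono hsub).trans (measure_biUnion_le _ hu _)
    _ ≤ ∑' b : u, A * ∫⁻ y in ball b.1.1 b.1.2, h y ∂μ := by
        rw [← ENNReal.tsum_mul_left]
        refine ENNReal.tsum_le_tsum fun b => ?_
        grw [hμ _ _ (hpos b (huT b.2)), mul_left_comm, hT b (huT b.2)]
    _ = A * ∫⁻ y in ⋃ b ∈ u, ball b.1 b.2, h y ∂μ := by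
        rw [ENNReal.tsum_mul_left,
          lintegral_biUnion hu (fun _ _ => isOpen_ball.measurableSet) hdisj_ball]
    _ ≤ A * ∫⁻ y, h y ∂μ := by grw [setLIntegral_le_lintegral]

theorem mul_measure_lt_maximalFunction_le [OpensMeasurableSpace X] [SecondCountableTopology X]
    {A : ℝ≥0} (hμ : ∀ c r, 0 < r → μ (closedBall c (5 * r)) ≤ A * μ (ball c r))
    (h : X → ℝ≥0∞) (t : ℝ≥0∞) :
    t * μ {x | t < maximalFunction μ h x} ≤ A * ∫⁻ y, h y ∂μ := by
  let T (n : ℕ) : Set (X × ℝ) := {b | 0 < b.2 ∧ b.2 ≤ n ∧ t < ⨍⁻ y in ball b.1 b.2, h y ∂μ}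
  have hlevel : {x | t < maximalFunction μ h x} = ⋃ n, ⋃ b ∈ T n, ball b.1 b.2 := by
    ext x
    simp only [mem_ofPred_eq, lt_maximalFunction_iff, mem_iUnion, exists_prop, Prod.exists, T]
    constructor
    · rintro ⟨c, r, hx, hcr⟩
      obtain ⟨n, hn⟩ := exists_nat_ge r
      exact ⟨n, c, r, ⟨pos_of_mem_ball hx, hn, hcr⟩, hx⟩
    · rintro ⟨n, c, r, ⟨-, -, hcr⟩, hx⟩
      exact ⟨c, r, hx, hcr⟩
  have hmono : Monotone fun n => ⋃ b ∈ T n, ball b.1 b.2 := fun m n hmn =>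
    biUnion_subset_biUnion_left fun b hb =>
      ⟨hb.1, hb.2.1.trans (Nat.cast_le.2 hmn), hb.2.2⟩
  rw [hlevel, hmono.measure_iUnion, ENNReal.mul_iSup]
  refine iSup_le fun n => mul_measure_biUnion_ball_le hμ (fun b hb => hb.1) (fun b hb => hb.2.1)
    fun b hb => ENNReal.mul_le_of_le_div ?_
  rw [← setLAverage_eq]
  exact hb.2.2.le

end MaximalFunction

section LayerCake

variable {Ω : Type*} [MeasurableSpace Ω] {μ : Measure Ω}

theorem lintegral_Ioi_ofReal_rpow (s : ℝ) :
    ∫⁻ t in Ioi (0 : ℝ), ENNReal.ofReal (t ^ s) = ⊤ := by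
  by_contra hs
  refine not_integrableOn_Ioi_rpow s ((lintegral_ofReal_ne_top_iff_integrable ?_ ?_).1 hs)
  · exact Measurable.aestronglyMeasurable (by fun_prop)
  · filter_upwards [ae_restrict_mem measurableSet_Ioi] with t ht
    exact Real.rpow_nonneg (le_of_lt ht) s

theorem lintegral_rpow_eq_lintegral_meas_ofReal_lt {F : Ω → ℝ≥0∞} (hF : Measurable F) {p : ℝ}
    (hp : 0 < p) :
    ∫⁻ x, F x ^ p ∂μ = ENNReal.ofReal p *
      ∫⁻ t in Ioi (0 : ℝ), μ {x | ENNReal.ofReal t < F x} * ENNReal.ofReal (t ^ (p - 1)) := by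
  by_cases hfin : ∀ᵐ x ∂μ, F x ≠ ⊤
  · calc ∫⁻ x, F x ^ p ∂μ = ∫⁻ x, ENNReal.ofReal ((F x).toReal ^ p) ∂μ := by
          refine lintegral_congr_ae ?_
          filter_upwards [hfin] with x hx
          rw [ENNReal.toReal_rpow, ENNReal.ofReal_toReal (ENNReal.rpow_ne_top_of_nonneg hp.le hx)]
      _ = ENNReal.ofReal p *
          ∫⁻ t in Ioi (0 : ℝ), μ {x | t < (F x).toReal} * ENNReal.ofReal (t ^ (p - 1)) :=
        lintegral_rpow_eq_lintegral_meas_lt_mul μ (ae_of_all _ fun _ => ENNReal.toReal_nonneg)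
          hF.ennreal_toReal.aemeasurable hp
      _ = _ := by
        congr 1
        refine setLIntegral_congr_fun measurableSet_Ioi fun t ht => ?_
        congr 1
        refine measure_congr ?_
        filter_upwards [hfin] with x hx
        exact propext (ENNReal.ofReal_lt_iff_lt_toReal (le_of_lt ht) hx).symm
  · replace hfin : μ {x | F x = ⊤} ≠ 0 := by simpa [ae_iff] using hfin
    have hleft : ∫⁻ x, F x ^ p ∂μ = ⊤ := by
      refine lintegral_eq_top_of_measure_eq_top_ne_zero (by fun_prop) ?_
      simpa [ENNReal.rpow_eq_top_iff_of_pos hp] using hfin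
    rw [hleft, eq_comm, ENNReal.mul_eq_top]
    refine .inl ⟨by simpa using hp, top_le_iff.1 ?_⟩
    calc ⊤ = ∫⁻ t in Ioi (0 : ℝ), μ {x | F x = ⊤} * ENNReal.ofReal (t ^ (p - 1)) := by
          rw [lintegral_const_mul _ (by fun_prop), lintegral_Ioi_ofReal_rpow, ENNReal.mul_top hfin]
      _ ≤ ∫⁻ t in Ioi (0 : ℝ), μ {x | ENNReal.ofReal t < F x} * ENNReal.ofReal (t ^ (p - 1)) := by
          gcongr with t x
          exact fun hx => hx ▸ ENNReal.ofReal_lt_top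

theorem lintegral_rpow_le_of_meas_lt_le {F h : Ω → ℝ≥0∞} (hF : Measurable F) (hh : Measurable h)
    {A : ℝ≥0} (hFh : ∀ t : ℝ, 0 < t → ENNReal.ofReal t * μ {x | ENNReal.ofReal t < F x} ≤
      A * ∫⁻ x in {x | ENNReal.ofReal t < 2 * h x}, h x ∂μ) {p : ℝ} (hp : 1 < p) :
    ∫⁻ x, F x ^ p ∂μ ≤ ENNReal.ofReal (p / (p - 1)) * A * 2 ^ (p - 1) * ∫⁻ x, h x ^ p ∂μ := by
  set ν := μ.withDensity h
  have hp1 : 0 < p - 1 := sub_pos.2 hp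
  have hlevel (t : ℝ) (ht : 0 < t) :
      μ {x | ENNReal.ofReal t < F x} * ENNReal.ofReal (t ^ (p - 1)) ≤
        A * (ν {x | ENNReal.ofReal t < 2 * h x} * ENNReal.ofReal (t ^ (p - 1 - 1))) := by
    calc _ = ENNReal.ofReal t * μ {x | ENNReal.ofReal t < F x} *
          ENNReal.ofReal (t ^ (p - 1 - 1)) := by
          rw [mul_right_comm, ← ENNReal.ofReal_mul ht.le, mul_comm,
            Real.rpow_sub_one ht.ne' (p - 1), mul_div_cancel₀ _ ht.ne']
      _ ≤ _ := by
          rw [← mul_assoc, withDensity_apply _ (measurableSet_lt measurable_const (by fun_prop))]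
          exact mul_le_mul_left (hFh t ht) _
  have hdensity : ∫⁻ x, (2 * h x) ^ (p - 1) ∂ν = 2 ^ (p - 1) * ∫⁻ x, h x ^ p ∂μ := by
    rw [lintegral_withDensity_eq_lintegral_mul _ hh (by fun_prop),
      ← lintegral_const_mul _ (by fun_prop)]
    refine lintegral_congr fun x => ?_
    rw [Pi.mul_apply, ENNReal.mul_rpow_of_nonneg _ _ hp1.le, mul_left_comm]
    congr 1
    simpa using (ENNReal.rpow_add_of_nonneg (x := h x) 1 (p - 1) zero_le_one hp1.le).symm
  calc ∫⁻ x, F x ^ p ∂μ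
      ≤ ENNReal.ofReal p * ∫⁻ t in Ioi (0 : ℝ),
          A * (ν {x | ENNReal.ofReal t < 2 * h x} * ENNReal.ofReal (t ^ (p - 1 - 1))) := by
        rw [lintegral_rpow_eq_lintegral_meas_ofReal_lt hF (by linarith)]
        exact mul_le_mul_right (setLIntegral_mono' measurableSet_Ioi hlevel) _
    _ = ENNReal.ofReal (p / (p - 1)) * A * (ENNReal.ofReal (p - 1) *
          ∫⁻ t in Ioi (0 : ℝ),
            ν {x | ENNReal.ofReal t < 2 * h x} * ENNReal.ofReal (t ^ (p - 1 - 1))) := by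
        rw [lintegral_const_mul' _ _ ENNReal.coe_ne_top]
        nth_rw 1 [← div_mul_cancel₀ p hp1.ne']
        rw [ENNReal.ofReal_mul' hp1.le]
        ring
    _ = ENNReal.ofReal (p / (p - 1)) * A * 2 ^ (p - 1) * ∫⁻ x, h x ^ p ∂μ := by
        rw [← lintegral_rpow_eq_lintegral_meas_ofReal_lt (by fun_prop) hp1, hdensity, mul_assoc,
          mul_assoc, mul_assoc]

end LayerCake

section MaximalTheorem

variable {X : Type*} [PseudoMetricSpace X] [MeasurableSpace X] [OpensMeasurableSpace X]
  [SecondCountableTopology X] {μ : Measure X}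

-- Only the part of `h` above `t / 2` can push its maximal function above `t`.
theorem mul_measure_lt_maximalFunction_le_setLIntegral
    {A : ℝ≥0} (hμ : ∀ c r, 0 < r → μ (closedBall c (5 * r)) ≤ A * μ (ball c r))
    {h : X → ℝ≥0∞} (hh : Measurable h) (t : ℝ≥0∞) :
    t * μ {x | t < maximalFunction μ h x} ≤ (2 * A : ℝ≥0) * ∫⁻ x in {x | t < 2 * h x}, h x ∂μ := by
  set k := {x | t < 2 * h x}.indicator h
  have hhk (x : X) : h x ≤ k x + t / 2 := by
    by_cases hx : t < 2 * h x
    · exact (indicator_of_mem (s := {x | t < 2 * h x}) hx h).ge.trans le_self_add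
    · refine le_add_left ((ENNReal.le_div_iff_mul_le (by simp) (by simp)).2 ?_)
      rw [mul_comm]
      exact not_lt.1 hx
  have hsub : {x | t < maximalFunction μ h x} ⊆ {x | t / 2 < maximalFunction μ k x} := by
    intro x hx
    by_contra hkx
    have := (maximalFunction_le_add hhk x).trans (add_le_add_left (not_lt.1 hkx) _)
    exact (this.trans_eq (ENNReal.add_halves t)).not_gt hx
  calc t * μ {x | t < maximalFunction μ h x}
      ≤ 2 * (t / 2 * μ {x | t / 2 < maximalFunction μ k x}) := by
        rw [← mul_assoc, ENNReal.mul_div_cancel (by simp) (by simp)]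
        gcongr
    _ ≤ 2 * (A * ∫⁻ x, k x ∂μ) := by
        exact mul_le_mul_right (mul_measure_lt_maximalFunction_le hμ k (t / 2)) 2
    _ = (2 * A : ℝ≥0) * ∫⁻ x in {x | t < 2 * h x}, h x ∂μ := by
        rw [lintegral_indicator (measurableSet_lt measurable_const (by fun_prop))]
        push_cast
        ring

theorem exists_eLpNorm_maximalFunction_le
    {A : ℝ≥0} (hμ : ∀ c r, 0 < r → μ (closedBall c (5 * r)) ≤ A * μ (ball c r))
    {p : ℝ} (hp : 1 < p) : ∃ C : ℝ≥0∞, C ≠ ⊤ ∧ ∀ h : X → ℝ≥0∞, Measurable h →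
      eLpNorm (maximalFunction μ h) (ENNReal.ofReal p) μ ≤ C * eLpNorm h (ENNReal.ofReal p) μ := by
  have hp0 : 0 < p := by linarith
  refine ⟨(ENNReal.ofReal (p / (p - 1)) * (2 * A : ℝ≥0) * 2 ^ (p - 1)) ^ (1 / p), ?_,
    fun h hh => ?_⟩
  · refine ENNReal.rpow_ne_top_of_nonneg (by positivity) (ENNReal.mul_ne_top (by finiteness) ?_)
    exact ENNReal.rpow_ne_top_of_nonneg (by linarith) ENNReal.ofNat_ne_top
  · rw [eLpNorm_eq_lintegral_rpow_enorm_toReal (by simpa using hp0) ENNReal.ofReal_ne_top,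
      eLpNorm_eq_lintegral_rpow_enorm_toReal (by simpa using hp0) ENNReal.ofReal_ne_top,
      ENNReal.toReal_ofReal hp0.le, ← ENNReal.mul_rpow_of_nonneg _ _ (by positivity)]
    simp only [enorm_eq_self]
    gcongr
    exact lintegral_rpow_le_of_meas_lt_le (measurable_maximalFunction h) hh
      (fun t _ => mul_measure_lt_maximalFunction_le_setLIntegral hμ hh _) hp

end MaximalTheorem

section RadialKernel

theorem setLIntegral_ball_le_mul_maximalFunction {X : Type*} [PseudoMetricSpace X]
    [MeasurableSpace X] {μ : Measure X} (h : X → ℝ≥0∞) {x : X} {r : ℝ} (hr : μ (ball x r) ≠ ⊤) :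
    ∫⁻ y in ball x r, h y ∂μ ≤ μ (ball x r) * maximalFunction μ h x := by
  rcases le_or_gt r 0 with hr0 | hr0
  · simp [ball_eq_empty.2 hr0]
  · grw [← measure_mul_setLAverage h hr,
      setLAverage_ball_le_maximalFunction h (mem_ball_self hr0)]

-- Layer-cake formula: a radially decreasing kernel is a superposition of indicators of balls.
theorem lintegral_ofReal_mul_le_maximalFunction {X : Type*} [PseudoMetricSpace X]
    [MeasurableSpace X] {μ : Measure X} {k : X → ℝ} (hk : Measurable k) (hk0 : 0 ≤ k)
    (hkμ : Integrable k μ) {x : X} (hball : ∀ t > 0, ∃ r, {y | t < k y} = ball x r)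
    {h : X → ℝ≥0∞} (hh : Measurable h) :
    ∫⁻ y, ENNReal.ofReal (k y) * h y ∂μ ≤
      ENNReal.ofReal (∫ y, k y ∂μ) * maximalFunction μ h x := by
  have hlevel (t : ℝ) (ht : 0 < t) :
      μ.withDensity h {y | t < k y} ≤ μ {y | t < k y} * maximalFunction μ h x := by
    rw [withDensity_apply _ (measurableSet_lt measurable_const hk)]
    have hfin := (hkμ.measure_gt_lt_top ht).ne
    obtain ⟨r, hr⟩ := hball t ht
    rw [hr] at hfin ⊢
    exact setLIntegral_ball_le_mul_maximalFunction h hfin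
  calc ∫⁻ y, ENNReal.ofReal (k y) * h y ∂μ
      = ∫⁻ y, ENNReal.ofReal (k y) ∂μ.withDensity h := by
        rw [lintegral_withDensity_eq_lintegral_mul _ hh (by fun_prop)]
        simp only [Pi.mul_apply, mul_comm]
    _ = ∫⁻ t in Ioi (0 : ℝ), μ.withDensity h {y | t < k y} :=
        lintegral_eq_lintegral_meas_lt _ (ae_of_all _ hk0) hk.aemeasurable
    _ ≤ ∫⁻ t in Ioi (0 : ℝ), μ {y | t < k y} * maximalFunction μ h x :=
        setLIntegral_mono' measurableSet_Ioi hlevel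
    _ = ENNReal.ofReal (∫ y, k y ∂μ) * maximalFunction μ h x := by
        have hanti : Antitone fun t => μ {y | t < k y} := fun s t hst =>
          measure_mono fun y hy => hst.trans_lt hy
        rw [lintegral_mul_const _ hanti.measurable,
          ← lintegral_eq_lintegral_meas_lt _ (ae_of_all _ hk0) hk.aemeasurable,
          ofReal_integral_eq_lintegral_ofReal hkμ (ae_of_all _ hk0)]

variable {V : Type*} [NormedAddCommGroup V] [NormedSpace ℝ V] [FiniteDimensional ℝ V]
  [MeasurableSpace V] [BorelSpace V] (μ : Measure V) [μ.IsAddHaarMeasure]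

theorem addHaar_closedBall_five_mul_le (c : V) (r : ℝ) (hr : 0 < r) :
    μ (closedBall c (5 * r)) ≤ (5 ^ Module.finrank ℝ V : ℝ≥0) * μ (ball c r) := by
  rw [Measure.addHaar_closedBall μ c (by positivity), Measure.addHaar_ball_of_pos μ c hr, mul_pow,
    ENNReal.ofReal_mul (by positivity), mul_assoc, ENNReal.ofReal_pow (by norm_num)]
  simp

open Module in
theorem lintegral_rescaled_one_add_norm_rpow_mul_le {s : ℝ} (hs : finrank ℝ V < s) {R : ℝ}
    (hR : 0 < R) {h : V → ℝ≥0∞} (hh : Measurable h) (x : V) :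
    ∫⁻ y, ENNReal.ofReal (R ^ finrank ℝ V * (1 + ‖R • (x - y)‖) ^ (-s)) * h y ∂μ ≤
      ENNReal.ofReal (∫ w, (1 + ‖w‖) ^ (-s) ∂μ) * maximalFunction μ h x := by
  set k : V → ℝ := fun w => (1 + ‖w‖) ^ (-s)
  have hk : Integrable k μ := integrable_one_add_norm hs
  have hball (t : ℝ) (ht : 0 < t) :
      ∃ r, {y | t < R ^ finrank ℝ V * k (R • (x - y))} = ball x r := by
    refine ⟨((t / R ^ finrank ℝ V) ^ (-s)⁻¹ - 1) / R, ?_⟩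
    ext y
    have hs0 : -s < 0 := by have := (finrank ℝ V).cast_nonneg (α := ℝ); linarith
    rw [mem_ofPred_eq, ← div_lt_iff₀' (by positivity),
      ← Real.lt_rpow_inv_iff_of_neg (by positivity) (by positivity) hs0, mem_ball',
      dist_eq_norm, lt_div_iff₀ hR, lt_sub_iff_add_lt', norm_smul, Real.norm_of_nonneg hR.le,
      mul_comm R]
  refine (lintegral_ofReal_mul_le_maximalFunction (by fun_prop) (fun y => by positivity)
    (((hk.comp_smul hR.ne').comp_sub_left x).const_mul _) hball hh).trans_eq ?_
  rw [integral_const_mul, integral_sub_left_eq_self (fun y => k (R • y)) μ x,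
    Measure.integral_comp_smul_of_nonneg _ _ _ (hR := hR.le), smul_eq_mul,
    mul_inv_cancel_left₀ (by positivity)]

end RadialKernel

section GeometricSum

theorem summable_int_two_rpow_neg_mul_abs {δ : ℝ} (hδ : 0 < δ) :
    Summable fun k : ℤ => (2 : ℝ) ^ (-δ * |(k : ℝ)|) := by
  have hgeom : Summable fun n : ℕ => ((2 : ℝ) ^ (-δ)) ^ n :=
    summable_geometric_of_lt_one (by positivity)
      (Real.rpow_lt_one_of_one_lt_of_neg one_lt_two (neg_lt_zero.2 hδ))
  have hnat : Summable fun n : ℕ => (2 : ℝ) ^ (-δ * n) :=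
    hgeom.congr fun n => (Real.rpow_mul_natCast zero_le_two (-δ) n).symm
  exact .of_nat_of_neg (by simpa using hnat) (by simpa using hnat)

theorem exists_tsum_two_rpow_neg_mul_abs_sub_le {δ : ℝ} (hδ : 0 < δ) :
    ∃ C : ℝ≥0∞, C ≠ ⊤ ∧ ∀ s : ℝ, ∑' j : ℕ, ENNReal.ofReal (2 ^ (-δ * |j - s|)) ≤ C := by
  let F (k : ℤ) : ℝ≥0∞ := ENNReal.ofReal (2 ^ (-δ * |(k : ℝ)|))
  refine ⟨ENNReal.ofReal (2 ^ δ) * ∑' k, F k, ENNReal.mul_ne_top ENNReal.ofReal_ne_top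
    (summable_int_two_rpow_neg_mul_abs hδ).tsum_ofReal_ne_top, fun s => ?_⟩
  have hterm (j : ℕ) :
      ENNReal.ofReal (2 ^ (-δ * |j - s|)) ≤ ENNReal.ofReal (2 ^ δ) * F (j - ⌊s⌋) := by
    rw [← ENNReal.ofReal_mul (by positivity), ← Real.rpow_add two_pos]
    gcongr
    · exact one_le_two
    · have hfloor : |s - ⌊s⌋| ≤ 1 := abs_le.2
        ⟨by linarith [Int.floor_le s], by linarith [Int.lt_floor_add_one s]⟩
      have hshift := mul_le_mul_of_nonneg_left
        ((abs_sub_le (j : ℝ) s ⌊s⌋).trans (add_le_add_right hfloor _)) hδ.le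
      push_cast
      linarith
  calc ∑' j : ℕ, ENNReal.ofReal (2 ^ (-δ * |j - s|))
      ≤ ENNReal.ofReal (2 ^ δ) * ∑' j : ℕ, F (j - ⌊s⌋) := by
        rw [← ENNReal.tsum_mul_left]
        exact ENNReal.tsum_le_tsum hterm
    _ ≤ ENNReal.ofReal (2 ^ δ) * ∑' k, F k := by
        gcongr
        exact ENNReal.tsum_comp_le_tsum_of_injective (f := fun j : ℕ => (j : ℤ) - ⌊s⌋)
          (fun i j hij => by simpa using hij) F

variable {α β : ℝ}

-- The two bounds balance at the real index `s` with `2 ^ (s * β) = a / b`.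
theorem exists_min_two_rpow_mul_le (hα : 0 < α) (hαβ : α < β) {a b : ℝ} (ha : 0 < a)
    (hb : 0 < b) : ∃ s : ℝ, ∀ t : ℝ, min (2 ^ (-t * α) * a) (2 ^ (t * (β - α)) * b) ≤
      a ^ (1 - α / β) * b ^ (α / β) * 2 ^ (-min α (β - α) * |t - s|) := by
  have hβ : β ≠ 0 := by linarith
  set s := Real.logb 2 (a / b) / β
  have hab : a = b * 2 ^ (s * β) := by
    rw [div_mul_cancel₀ _ hβ, Real.rpow_logb two_pos (by norm_num) (by positivity),
      mul_div_cancel₀ _ hb.ne']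
  have hmean : a ^ (1 - α / β) * b ^ (α / β) = b * 2 ^ (s * (β - α)) := by
    have hexp : s * β * (1 - α / β) = s * (β - α) := by field_simp
    rw [hab, Real.mul_rpow hb.le (by positivity), ← Real.rpow_mul zero_le_two, mul_right_comm,
      ← Real.rpow_add hb, sub_add_cancel, Real.rpow_one, hexp]
  refine ⟨s, fun t => ?_⟩
  rw [hmean, mul_assoc, ← Real.rpow_add two_pos]
  rcases le_total s t with hst | hts
  · refine (min_le_left _ _).trans ?_
    rw [hab, mul_left_comm, ← Real.rpow_add two_pos, abs_of_nonneg (sub_nonneg.2 hst)]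
    refine mul_le_mul_of_nonneg_left (Real.rpow_le_rpow_of_exponent_le one_le_two ?_) hb.le
    linarith [mul_le_mul_of_nonneg_right (min_le_left α (β - α)) (sub_nonneg.2 hst)]
  · refine (min_le_right _ _).trans ?_
    rw [mul_comm _ b, abs_of_nonpos (sub_nonpos.2 hts)]
    refine mul_le_mul_of_nonneg_left (Real.rpow_le_rpow_of_exponent_le one_le_two ?_) hb.le
    linarith [mul_le_mul_of_nonpos_right (min_le_right α (β - α)) (sub_nonpos.2 hts)]

theorem exists_tsum_le_of_le_two_rpow_mul (hα : 0 < α) (hαβ : α < β) :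
    ∃ C : ℝ≥0∞, C ≠ ⊤ ∧ ∀ (a b : ℝ≥0∞) (u : ℕ → ℝ≥0∞),
      (∀ j : ℕ, u j ≤ ENNReal.ofReal (2 ^ (-(j : ℝ) * α)) * a) →
      (∀ j : ℕ, u j ≤ ENNReal.ofReal (2 ^ ((j : ℝ) * (β - α))) * b) →
      ∑' j, u j ≤ C * (a ^ (1 - α / β) * b ^ (α / β)) := by
  have hβ : 0 < β := hα.trans hαβ
  have hθ0 : 0 < α / β := by positivity
  have hθ1 : 0 < 1 - α / β := by rwa [sub_pos, div_lt_one hβ]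
  obtain ⟨C, hC, hsum⟩ := exists_tsum_two_rpow_neg_mul_abs_sub_le
    (lt_min hα (sub_pos.2 hαβ))
  refine ⟨C + 1, by finiteness, fun a b u hua hub => ?_⟩
  rcases eq_or_ne a 0 with rfl | ha0
  · simp_all
  rcases eq_or_ne b 0 with rfl | hb0
  · simp_all
  by_cases htop : a = ⊤ ∨ b = ⊤
  · have hmean : a ^ (1 - α / β) * b ^ (α / β) = ⊤ := by
      simp only [ENNReal.mul_eq_top, ne_eq, ENNReal.rpow_eq_zero_iff, ENNReal.rpow_eq_top_iff]
      grind
    simp [hmean]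
  obtain ⟨ha, hb⟩ := not_or.1 htop
  have ha_pos := ENNReal.toReal_pos ha0 ha
  have hb_pos := ENNReal.toReal_pos hb0 hb
  obtain ⟨s, hs⟩ := exists_min_two_rpow_mul_le hα hαβ ha_pos hb_pos
  have hterm (j : ℕ) : u j ≤
      a ^ (1 - α / β) * b ^ (α / β) * ENNReal.ofReal (2 ^ (-min α (β - α) * |j - s|)) := by
    refine (le_min (hua j) (hub j)).trans ?_
    rw [← ENNReal.ofReal_toReal ha, ← ENNReal.ofReal_toReal hb,
      ENNReal.ofReal_rpow_of_pos ha_pos, ENNReal.ofReal_rpow_of_pos hb_pos,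
      ← ENNReal.ofReal_mul (by positivity), ← ENNReal.ofReal_mul (by positivity),
      ← ENNReal.ofReal_mul (by positivity), ← ENNReal.ofReal_mul (by positivity),
      ← ENNReal.ofReal_min]
    exact ENNReal.ofReal_le_ofReal (hs j)
  calc ∑' j, u j ≤ a ^ (1 - α / β) * b ^ (α / β) *
        ∑' j : ℕ, ENNReal.ofReal (2 ^ (-min α (β - α) * |j - s|)) := by
        rw [← ENNReal.tsum_mul_left]
        exact ENNReal.tsum_le_tsum hterm
    _ ≤ (C + 1) * (a ^ (1 - α / β) * b ^ (α / β)) := by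
        rw [mul_comm]
        gcongr
        exact (hsum s).trans le_self_add

end GeometricSum

section FourierDecay

theorem exists_norm_iteratedFDeriv_section_le {V P E : Type*} [NormedAddCommGroup V]
    [NormedSpace ℝ V] [NormedAddCommGroup P] [NormedSpace ℝ P] [NormedAddCommGroup E]
    [NormedSpace ℝ E] {n : ℕ} {F : V × P → E} (hF : ContDiff ℝ n F) {K : Set V}
    (hK : IsCompact K) (hFK : ∀ ξ ε, ξ ∉ K → F (ξ, ε) = 0) {T : Set P} (hT : IsCompact T) :
    ∃ B : ℝ, ∀ ε ∈ T, ∀ ξ,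
      ‖iteratedFDeriv ℝ n (fun ξ => F (ξ, ε)) ξ‖ ≤ K.indicator (fun _ => B) ξ := by
  obtain ⟨B, hB⟩ := (hK.prod hT).exists_bound_of_continuousOn
    (hF.continuous_iteratedFDeriv le_rfl).continuousOn
  refine ⟨B, fun ε hε ξ => ?_⟩
  by_cases hξ : ξ ∈ K
  · have hcomp : (fun ξ => F (ξ, ε)) =
        (fun z => F (z + (0, ε))) ∘ ContinuousLinearMap.inl ℝ V P := by
      ext ξ
      simp
    have hshift : ContDiff ℝ n fun z => F (z + (0, ε)) := hF.comp (by fun_prop)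
    rw [indicator_of_mem hξ, hcomp, ContinuousLinearMap.iteratedFDeriv_comp_right _ hshift _ le_rfl,
      iteratedFDeriv_comp_add_right]
    refine (ContinuousMultilinearMap.norm_compContinuousLinearMap_le _ _).trans ?_
    simp only [ContinuousLinearMap.inl_apply, Prod.mk_add_mk, add_zero, zero_add,
      Finset.prod_const]
    refine (mul_le_of_le_one_right (norm_nonneg _) ?_).trans (hB (ξ, ε) ⟨hξ, hε⟩)
    exact pow_le_one₀ (norm_nonneg _) (ContinuousLinearMap.norm_inl_le_one ..)
  · have hsupp : tsupport (fun ξ => F (ξ, ε)) ⊆ K :=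
      closure_minimal (fun z hz => not_imp_comm.1 (hFK z ε) hz) hK.isClosed
    rw [indicator_of_notMem hξ, image_eq_zero_of_notMem_tsupport
      fun hmem => hξ (hsupp (tsupport_iteratedFDeriv_subset n hmem)), norm_zero]

variable {V P E : Type*} [NormedAddCommGroup V] [InnerProductSpace ℝ V] [FiniteDimensional ℝ V]
  [MeasurableSpace V] [BorelSpace V] [NormedAddCommGroup P] [NormedSpace ℝ P]
  [NormedAddCommGroup E] [NormedSpace ℂ E] {n : ℕ} {F : V × P → E} {K : Set V} {T : Set P}

theorem exists_pow_mul_norm_fourier_section_le (hF : ContDiff ℝ n F) (hK : IsCompact K)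
    (hFK : ∀ ξ ε, ξ ∉ K → F (ξ, ε) = 0) (hT : IsCompact T) :
    ∃ D : ℝ, ∀ ε ∈ T, ∀ w, ‖w‖ ^ n * ‖𝓕 (fun ξ => F (ξ, ε)) w‖ ≤ D := by
  choose! B hB using fun (m : ℕ) (hm : m ≤ n) =>
    exists_norm_iteratedFDeriv_section_le (hF.of_le (Nat.cast_le.2 hm)) hK hFK hT
  have hBint (m : ℕ) : Integrable (K.indicator fun _ => B m) :=
    (integrable_indicator_iff hK.measurableSet).2 (integrableOn_const hK.measure_lt_top.ne)
  have hsection (ε : P) : ContDiff ℝ n fun ξ => F (ξ, ε) := hF.comp (by fun_prop)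
  have hint (m : ℕ) (hm : m ≤ n) (ε : P) (hε : ε ∈ T) :
      Integrable fun ξ => ‖iteratedFDeriv ℝ m (fun ξ => F (ξ, ε)) ξ‖ :=
    (hBint m).mono'
      ((hsection ε).continuous_iteratedFDeriv (Nat.cast_le.2 hm)).norm.aestronglyMeasurable
      (ae_of_all _ fun ξ => by simpa using hB m hm ε hε ξ)
  refine ⟨2 ^ n * ∑ m ∈ Finset.range (n + 1), ∫ ξ, K.indicator (fun _ => B m) ξ, fun ε hε w => ?_⟩
  have hfourier := Real.pow_mul_norm_iteratedFDeriv_fourier_le (K := 0) (N := n) (hsection ε)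
    (fun k m hk hm => by
      obtain rfl : k = 0 := by simpa using hk
      simpa using hint m (Nat.cast_le.1 hm) ε hε) (k := 0) (n := n) le_rfl le_rfl w
  simp only [norm_iteratedFDeriv_zero, zero_add, Finset.range_one, Finset.sum_product,
    Finset.sum_singleton, pow_zero, one_mul, Nat.cast_zero, mul_zero] at hfourier
  refine hfourier.trans ?_
  gcongr with m hm
  · exact hint m (Finset.mem_range_succ_iff.1 hm) ε hε
  · exact hBint m
  · exact fun ξ => hB m (Finset.mem_range_succ_iff.1 hm) ε hε ξ

theorem exists_norm_fourierInv_section_le (hF : ContDiff ℝ n F) (hK : IsCompact K)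
    (hFK : ∀ ξ ε, ξ ∉ K → F (ξ, ε) = 0) (hT : IsCompact T) :
    ∃ C : ℝ, ∀ ε ∈ T, ∀ w, ‖𝓕⁻ (fun ξ => F (ξ, ε)) w‖ ≤ C * (1 + ‖w‖) ^ (-n : ℝ) := by
  obtain ⟨D₀, hD₀⟩ := exists_pow_mul_norm_fourier_section_le (n := 0)
    (hF.of_le (Nat.cast_le.2 n.zero_le)) hK hFK hT
  obtain ⟨D, hD⟩ := exists_pow_mul_norm_fourier_section_le hF hK hFK hT
  refine ⟨2 ^ (n - 1) * (D₀ + D), fun ε hε w => ?_⟩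
  rw [Real.rpow_neg (by positivity), Real.rpow_natCast, ← div_eq_mul_inv,
    le_div_iff₀ (by positivity), Real.fourierInv_eq_fourier_neg]
  calc ‖𝓕 (fun ξ => F (ξ, ε)) (-w)‖ * (1 + ‖w‖) ^ n
      ≤ ‖𝓕 (fun ξ => F (ξ, ε)) (-w)‖ * (2 ^ (n - 1) * (1 ^ n + ‖w‖ ^ n)) := by
        gcongr
        exact add_pow_le zero_le_one (norm_nonneg w) n
    _ = 2 ^ (n - 1) * (‖-w‖ ^ 0 * ‖𝓕 (fun ξ => F (ξ, ε)) (-w)‖ +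
          ‖-w‖ ^ n * ‖𝓕 (fun ξ => F (ξ, ε)) (-w)‖) := by
        rw [norm_neg]
        ring
    _ ≤ 2 ^ (n - 1) * (D₀ + D) := by
        gcongr
        · exact hD₀ ε hε (-w)
        · exact hD ε hε (-w)

end FourierDecay

section FourierMultiplier

open Module

variable {V : Type*} [NormedAddCommGroup V] [InnerProductSpace ℝ V] [FiniteDimensional ℝ V]
  [MeasurableSpace V] [BorelSpace V]

theorem fourierInv_comp_inv_smul {E : Type*} [NormedAddCommGroup E] [NormedSpace ℂ E] (m : V → E)
    {R : ℝ} (hR : 0 < R) (w : V) :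
    𝓕⁻ (fun ξ => m (R⁻¹ • ξ)) w = (R ^ finrank ℝ V : ℝ) • 𝓕⁻ m (R • w) := by
  rw [Real.fourierInv_eq, Real.fourierInv_eq, ← Measure.integral_comp_inv_smul_of_nonneg volume
    (fun ζ : V => Real.fourierChar (inner ℝ ζ (R • w)) • m ζ) hR.le]
  refine integral_congr_ae (ae_of_all _ fun ξ => ?_)
  simp only [real_inner_smul_left, real_inner_smul_right, mul_inv_cancel_left₀ hR.ne']

theorem integrable_fourierChar_inner_smul {E : Type*} [NormedAddCommGroup E] [NormedSpace ℂ E]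
    {u : V → E} (hu : Integrable u) (x : V) :
    Integrable fun ξ => Real.fourierChar (inner ℝ ξ x) • u ξ := by
  have := (Real.fourierIntegral_convergent_iff (μ := volume) (f := u) (-x)).2 hu
  simpa using this

theorem fourierInv_mul_fourier {m g : V → ℂ} (hm : Integrable m) (hg : Integrable g) (x : V) :
    𝓕⁻ (fun ξ => m ξ * 𝓕 g ξ) x = ∫ y, 𝓕⁻ m (x - y) * g y := by
  let G (ξ : V) : ℂ := Real.fourierChar (inner ℝ ξ x) • m ξ
  have hG : Integrable G := integrable_fourierChar_inner_smul hm x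
  have hfourierG (y : V) : 𝓕 G y = 𝓕⁻ m (x - y) := by
    rw [Real.fourierInv_eq, Real.fourier_eq]
    refine integral_congr_ae (ae_of_all _ fun ξ => ?_)
    simp only [G, smul_smul, ← AddChar.map_add_eq_mul, inner_sub_right, neg_add_eq_sub]
  have hflip : ∫ ξ, 𝓕 g ξ • G ξ = ∫ y, g y • 𝓕 G y := by
    simpa using! (VectorFourier.integral_fourierIntegral_smul_eq_flip (L := innerₗ V)
      Real.continuous_fourierChar continuous_inner hg hG)
  simp only [hfourierG, smul_eq_mul, mul_comm (g _)] at hflip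
  rw [← hflip, Real.fourierInv_eq]
  refine integral_congr_ae (ae_of_all _ fun ξ => ?_)
  simp only [G, Circle.smul_def, smul_eq_mul]
  ring

theorem exists_enorm_fourierInv_mul_fourier_le_maximalFunction {P : Type*} [NormedAddCommGroup P]
    [NormedSpace ℝ P] {F : V × P → ℂ} (hF : ContDiff ℝ (finrank ℝ V + 1 : ℕ) F) {K : Set V}
    (hK : IsCompact K) (hFK : ∀ ξ ε, ξ ∉ K → F (ξ, ε) = 0) {T : Set P} (hT : IsCompact T) :
    ∃ C : ℝ≥0∞, C ≠ ⊤ ∧ ∀ ε ∈ T, ∀ R : ℝ, 0 < R → ∀ g : V → ℂ, Measurable g → Integrable g →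
      ∀ x, ‖𝓕⁻ (fun ξ => F (R⁻¹ • ξ, ε) * 𝓕 g ξ) x‖ₑ ≤
        C * maximalFunction volume (‖g ·‖ₑ) x := by
  set n := finrank ℝ V
  obtain ⟨C, hC⟩ := exists_norm_fourierInv_section_le hF hK hFK hT
  refine ⟨ENNReal.ofReal C * ENNReal.ofReal (∫ w : V, (1 + ‖w‖) ^ (-(n + 1 : ℕ) : ℝ)),
    by finiteness, fun ε hε R hR g hgm hg x => ?_⟩
  have hm : Integrable fun ξ => F (R⁻¹ • ξ, ε) :=
    ((hF.continuous.comp (by fun_prop)).integrable_of_hasCompactSupport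
      (HasCompactSupport.intro hK fun ξ hξ => hFK ξ ε hξ)).comp_smul
      (f := fun ξ => F (ξ, ε)) (inv_ne_zero hR.ne')
  have hkernel (y : V) : ‖𝓕⁻ (fun ξ => F (R⁻¹ • ξ, ε)) (x - y)‖ₑ ≤ ENNReal.ofReal C *
      ENNReal.ofReal (R ^ n * (1 + ‖R • (x - y)‖) ^ (-(n + 1 : ℕ) : ℝ)) := by
    rw [fourierInv_comp_inv_smul (fun ξ => F (ξ, ε)) hR, ← ofReal_norm, norm_smul,
      Real.norm_of_nonneg (by positivity), ← ENNReal.ofReal_mul' (by positivity), mul_left_comm]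
    gcongr
    exact hC ε hε _
  calc ‖𝓕⁻ (fun ξ => F (R⁻¹ • ξ, ε) * 𝓕 g ξ) x‖ₑ
      ≤ ∫⁻ y, ‖𝓕⁻ (fun ξ => F (R⁻¹ • ξ, ε)) (x - y) * g y‖ₑ := by
        rw [fourierInv_mul_fourier hm hg]
        exact enorm_integral_le_lintegral_enorm _
    _ ≤ ENNReal.ofReal C * ∫⁻ y,
          ENNReal.ofReal (R ^ n * (1 + ‖R • (x - y)‖) ^ (-(n + 1 : ℕ) : ℝ)) * ‖g y‖ₑ := by
        rw [← lintegral_const_mul' _ _ ENNReal.ofReal_ne_top]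
        refine lintegral_mono fun y => ?_
        grw [enorm_mul, hkernel, mul_assoc]
    _ ≤ _ := by
        grw [lintegral_rescaled_one_add_norm_rpow_mul_le volume (by simp [n]) hR hgm.enorm,
          mul_assoc]

end FourierMultiplier

section BesselSymbol

variable {V : Type*} [NormedAddCommGroup V] [InnerProductSpace ℝ V]

theorem contDiff_mul_sq_add_norm_sq_rpow {n : WithTop ℕ∞} {ψ : V → ℝ} (hψ : ContDiff ℝ n ψ)
    (hψ_zero : ψ =ᶠ[𝓝 0] 0) (s : ℝ) :
    ContDiff ℝ n fun z : V × ℝ => ψ z.1 * (z.2 ^ 2 + ‖z.1‖ ^ 2) ^ s := by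
  refine contDiff_iff_contDiffAt.2 fun ⟨ξ, ε⟩ => ?_
  rcases eq_or_ne ξ 0 with rfl | hξ
  · refine contDiffAt_const (c := (0 : ℝ)) |>.congr_of_eventuallyEq ?_
    filter_upwards [(continuous_fst.tendsto ((0 : V), ε)).eventually hψ_zero] with z hz
    simp [hz]
  · refine (hψ.comp contDiff_fst).contDiffAt.mul (ContDiffAt.rpow_const_of_ne ?_ ?_)
    · exact ((contDiff_snd.pow 2).add (contDiff_fst.norm_sq ℝ)).contDiffAt
    · positivity

theorem one_add_norm_sq_rpow_eq_mul (s : ℝ) {R : ℝ} (hR : 0 < R) (ξ : V) :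
    (1 + ‖ξ‖ ^ 2) ^ s = R ^ (2 * s) * (R⁻¹ ^ 2 + ‖R⁻¹ • ξ‖ ^ 2) ^ s := by
  have hscale : 1 + ‖ξ‖ ^ 2 = R ^ 2 * (R⁻¹ ^ 2 + ‖R⁻¹ • ξ‖ ^ 2) := by
    rw [norm_smul, Real.norm_of_nonneg (by positivity)]
    field_simp
  rw [hscale, Real.mul_rpow (by positivity) (by positivity), Real.rpow_mul hR.le, Real.rpow_two]

variable [FiniteDimensional ℝ V] [MeasurableSpace V] [BorelSpace V]

open Module

theorem exists_enorm_fourierInv_mul_rpow_le_maximalFunction {φ : V → ℝ}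
    (hφ : ContDiff ℝ (finrank ℝ V + 1 : ℕ) φ) (hφ_supp : HasCompactSupport φ) (s : ℝ) :
    ∃ C : ℝ≥0∞, C ≠ ⊤ ∧ ∀ g : V → ℂ, Measurable g → Integrable g → ∀ x,
      ‖𝓕⁻ (fun ξ => ((φ ξ * (1 + ‖ξ‖ ^ 2) ^ s : ℝ) : ℂ) * 𝓕 g ξ) x‖ₑ ≤
        C * maximalFunction volume (‖g ·‖ₑ) x := by
  have hsymbol : ContDiff ℝ (finrank ℝ V + 1 : ℕ)
      fun z : V × ℝ => ((φ z.1 * (1 + ‖z.1‖ ^ 2) ^ s : ℝ) : ℂ) :=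
    Complex.ofRealCLM.contDiff.comp <| (hφ.comp contDiff_fst).mul <|
      (contDiff_const.add (contDiff_fst.norm_sq ℝ)).rpow_const_of_ne fun z => by positivity
  obtain ⟨C, hC, hbound⟩ := exists_enorm_fourierInv_mul_fourier_le_maximalFunction hsymbol hφ_supp
    (fun ξ ε hξ => by simp [image_eq_zero_of_notMem_tsupport hξ]) (isCompact_singleton (x := 0))
  exact ⟨C, hC, fun g hgm hg x => by simpa using hbound 0 rfl 1 one_pos g hgm hg x⟩

-- After rescaling by `R`, the symbol `ψ(ξ) (R⁻² + |ξ|²)^s` depends smoothly on `R⁻¹ ∈ [0, 1]`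
-- because `ψ` vanishes near the origin, so the bounds are uniform in `R ≥ 1`.
theorem exists_enorm_fourierInv_rescaled_mul_rpow_le_maximalFunction {ψ : V → ℝ}
    (hψ : ContDiff ℝ (finrank ℝ V + 1 : ℕ) ψ) (hψ_supp : HasCompactSupport ψ)
    (hψ_zero : ψ =ᶠ[𝓝 0] 0) (s : ℝ) :
    ∃ C : ℝ≥0∞, C ≠ ⊤ ∧ ∀ R : ℝ, 1 ≤ R → ∀ g : V → ℂ, Measurable g → Integrable g → ∀ x,
      ‖𝓕⁻ (fun ξ => ((ψ (R⁻¹ • ξ) * (1 + ‖ξ‖ ^ 2) ^ s : ℝ) : ℂ) * 𝓕 g ξ) x‖ₑ ≤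
        ENNReal.ofReal (R ^ (2 * s)) * (C * maximalFunction volume (‖g ·‖ₑ) x) := by
  obtain ⟨C, hC, hbound⟩ := exists_enorm_fourierInv_mul_fourier_le_maximalFunction
    (Complex.ofRealCLM.contDiff.comp (contDiff_mul_sq_add_norm_sq_rpow hψ hψ_zero s)) hψ_supp
    (fun ξ ε hξ => by simp [image_eq_zero_of_notMem_tsupport hξ]) (isCompact_Icc (a := 0) (b := 1))
  refine ⟨C, hC, fun R hR g hgm hg x => ?_⟩
  have hR0 : 0 < R := zero_lt_one.trans_le hR
  have hfactor : 𝓕⁻ (fun ξ => ((ψ (R⁻¹ • ξ) * (1 + ‖ξ‖ ^ 2) ^ s : ℝ) : ℂ) * 𝓕 g ξ) x =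
      R ^ (2 * s) • 𝓕⁻ (fun ξ =>
        ((ψ (R⁻¹ • ξ) * (R⁻¹ ^ 2 + ‖R⁻¹ • ξ‖ ^ 2) ^ s : ℝ) : ℂ) * 𝓕 g ξ) x := by
    rw [Real.fourierInv_eq, Real.fourierInv_eq, ← integral_smul]
    refine integral_congr_ae (ae_of_all _ fun ξ => ?_)
    simp only [one_add_norm_sq_rpow_eq_mul s hR0 ξ, Circle.smul_def, smul_eq_mul, Complex.real_smul]
    push_cast
    ring
  rw [hfactor, enorm_smul, Real.enorm_of_nonneg (by positivity)]
  gcongr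
  exact hbound R⁻¹ ⟨by positivity, inv_le_one_of_one_le₀ hR⟩ R hR0 g hgm hg x

end BesselSymbol

section ApproximateIdentity

variable {V : Type*} [NormedAddCommGroup V] [InnerProductSpace ℝ V] [FiniteDimensional ℝ V]
  [MeasurableSpace V] [BorelSpace V] {φ : V → ℝ}

theorem integrable_comp_smul_mul (hφ : Continuous φ) (hφ_supp : HasCompactSupport φ) (c : ℝ)
    {u : V → ℂ} (hu : Integrable u) : Integrable fun ξ => (φ (c • ξ) : ℂ) * u ξ := by
  obtain ⟨B, hB⟩ := hφ_supp.exists_bound_of_continuous hφ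
  exact hu.bdd_mul (c := B) (by fun_prop) (ae_of_all _ fun ξ => by simpa using hB (c • ξ))

theorem fourierInv_sub_apply {u v : V → ℂ} (hu : Integrable u) (hv : Integrable v) (x : V) :
    𝓕⁻ (fun ξ => u ξ - v ξ) x = 𝓕⁻ u x - 𝓕⁻ v x := by
  simp only [Real.fourierInv_eq, smul_sub]
  exact integral_sub (integrable_fourierChar_inner_smul hu x)
    (integrable_fourierChar_inner_smul hv x)

theorem tendsto_fourierInv_comp_smul_mul_fourier {ι : Type*} {l : Filter ι} [l.IsCountablyGenerated]
    (hφ : Continuous φ) (hφ_supp : HasCompactSupport φ) (hφ_zero : φ 0 = 1) {c : ι → ℝ}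
    (hc : Tendsto c l (𝓝 0)) {f : V → ℂ} (hf : Continuous f) (hfi : Integrable f)
    (hFf : Integrable (𝓕 f)) (x : V) :
    Tendsto (fun i => 𝓕⁻ (fun ξ => (φ (c i • ξ) : ℂ) * 𝓕 f ξ) x) l (𝓝 (f x)) := by
  obtain ⟨B, hB⟩ := hφ_supp.exists_bound_of_continuous hφ
  nth_rw 2 [← hf.fourierInv_fourier_eq hfi hFf]
  simp only [Real.fourierInv_eq]
  refine tendsto_integral_filter_of_dominated_convergence (fun ξ => B * ‖𝓕 f ξ‖)
    (.of_forall fun i => ?_) (.of_forall fun i => ae_of_all _ fun ξ => ?_) (hFf.norm.const_mul B)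
    (ae_of_all _ fun ξ => ?_)
  · exact (integrable_fourierChar_inner_smul
      (integrable_comp_smul_mul hφ hφ_supp (c i) hFf) x).aestronglyMeasurable
  · rw [Circle.norm_smul, norm_mul, Complex.norm_real]
    gcongr
    exact hB _
  · have hφξ : Tendsto (fun i => φ (c i • ξ)) l (𝓝 1) := by
      simpa [Function.comp_def, hφ_zero] using (hφ.tendsto _).comp (hc.smul_const ξ)
    simpa using (hφξ.ofReal.mul_const (𝓕 f ξ)).const_smul (Real.fourierChar (inner ℝ ξ x))

end ApproximateIdentity

section LittlewoodPaley

variable {d : ℕ} {φ : EuclideanSpace ℝ (Fin d) → ℝ} {f g : EuclideanSpace ℝ (Fin d) → ℂ}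

/-- The annular cutoff `ψ(ξ) = φ(ξ) - φ(2ξ)` of the Littlewood–Paley decomposition; dilated by
`2 ^ j`, it is the symbol of `LPblock φ j` for `j ≠ 0`. -/
def dyadicSymbol (φ : EuclideanSpace ℝ (Fin d) → ℝ) (ξ : EuclideanSpace ℝ (Fin d)) : ℝ :=
  φ ξ - φ ((2 : ℝ) • ξ)

theorem dyadicSymbol_eventuallyEq_zero (hφ_one : φ =ᶠ[𝓝 0] 1) : dyadicSymbol φ =ᶠ[𝓝 0] 0 := by
  have hdilation : Tendsto (fun ξ : EuclideanSpace ℝ (Fin d) => (2 : ℝ) • ξ) (𝓝 0) (𝓝 0) :=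
    (continuous_const_smul 2).tendsto' _ _ (smul_zero _)
  filter_upwards [hφ_one, hdilation.eventually hφ_one] with ξ hξ hξ2
  simp [dyadicSymbol, hξ, hξ2]

theorem LPblock_zero (φ : EuclideanSpace ℝ (Fin d) → ℝ) (f : EuclideanSpace ℝ (Fin d) → ℂ) :
    LPblock φ 0 f = 𝓕⁻ fun ξ => (φ ξ : ℂ) * 𝓕 f ξ :=
  if_pos rfl

theorem LPblock_of_ne_zero (φ : EuclideanSpace ℝ (Fin d) → ℝ) {j : ℕ} (hj : j ≠ 0)
    (f : EuclideanSpace ℝ (Fin d) → ℂ) :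
    LPblock φ j f = 𝓕⁻ fun ξ => (dyadicSymbol φ (((2 : ℝ) ^ j)⁻¹ • ξ) : ℂ) * 𝓕 f ξ := by
  have hscale : (2 : ℝ) ^ (-(j : ℝ) + 1) = 2 * ((2 : ℝ) ^ j)⁻¹ := by
    rw [Real.rpow_add_one two_ne_zero, Real.rpow_neg zero_le_two, Real.rpow_natCast, mul_comm]
  simp only [LPblock, if_neg hj, hscale, Real.rpow_neg zero_le_two, Real.rpow_natCast,
    dyadicSymbol, smul_smul]

theorem sum_range_succ_LPblock (hφ : Continuous φ) (hφ_supp : HasCompactSupport φ)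
    (hFf : Integrable (𝓕 f)) (x : EuclideanSpace ℝ (Fin d)) (N : ℕ) :
    ∑ j ∈ Finset.range (N + 1), LPblock φ j f x =
      𝓕⁻ (fun ξ => (φ (((2 : ℝ) ^ N)⁻¹ • ξ) : ℂ) * 𝓕 f ξ) x := by
  induction N with
  | zero => simp [LPblock_zero]
  | succ N ih =>
    have hsymbol (ξ : EuclideanSpace ℝ (Fin d)) :
        (dyadicSymbol φ (((2 : ℝ) ^ (N + 1))⁻¹ • ξ) : ℂ) * 𝓕 f ξ =
          (φ (((2 : ℝ) ^ (N + 1))⁻¹ • ξ) : ℂ) * 𝓕 f ξ - (φ (((2 : ℝ) ^ N)⁻¹ • ξ) : ℂ) * 𝓕 f ξ := by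
      have hscale : 2 * ((2 : ℝ) ^ (N + 1))⁻¹ = ((2 : ℝ) ^ N)⁻¹ := by
        field_simp
        ring
      rw [dyadicSymbol, smul_smul, hscale, Complex.ofReal_sub, sub_mul]
    simp only [Finset.sum_range_succ _ (N + 1), ih, LPblock_of_ne_zero φ N.succ_ne_zero, hsymbol]
    rw [fourierInv_sub_apply (integrable_comp_smul_mul hφ hφ_supp _ hFf)
      (integrable_comp_smul_mul hφ hφ_supp _ hFf), add_sub_cancel]

theorem enorm_le_tsum_enorm_LPblock (hφ : Continuous φ) (hφ_supp : HasCompactSupport φ)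
    (hφ_zero : φ 0 = 1) (hf : Continuous f) (hfi : Integrable f) (hFf : Integrable (𝓕 f))
    (x : EuclideanSpace ℝ (Fin d)) : ‖f x‖ₑ ≤ ∑' j, ‖LPblock φ j f x‖ₑ := by
  have hscale : Tendsto (fun N : ℕ => ((2 : ℝ) ^ N)⁻¹) atTop (𝓝 0) :=
    tendsto_inv_atTop_zero.comp (tendsto_pow_atTop_atTop_of_one_lt one_lt_two)
  have hlim := tendsto_fourierInv_comp_smul_mul_fourier hφ hφ_supp hφ_zero hscale hf hfi hFf x
  refine le_of_tendsto hlim.enorm (.of_forall fun N => ?_)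
  rw [← sum_range_succ_LPblock hφ hφ_supp hFf]
  exact (enorm_sum_le _ _).trans (ENNReal.sum_le_tsum _)

theorem exists_enorm_LPblock_le_maximalFunction (hφ : ContDiff ℝ (d + 1 : ℕ) φ)
    (hφ_supp : HasCompactSupport φ) (hφ_one : φ =ᶠ[𝓝 0] 1) (α : ℝ) :
    ∃ C : ℝ≥0∞, C ≠ ⊤ ∧ ∀ f g : EuclideanSpace ℝ (Fin d) → ℂ, Measurable g → Integrable g →
      (∀ ξ, 𝓕 f ξ = (((1 + ‖ξ‖ ^ 2) ^ (-(α / 2)) : ℝ) : ℂ) * 𝓕 g ξ) → ∀ (j : ℕ) x,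
        ‖LPblock φ j f x‖ₑ ≤
          ENNReal.ofReal (2 ^ (-(j : ℝ) * α)) * (C * maximalFunction volume (‖g ·‖ₑ) x) := by
  have hdim : d = Module.finrank ℝ (EuclideanSpace ℝ (Fin d)) := finrank_euclideanSpace_fin.symm
  have hψ : ContDiff ℝ (d + 1 : ℕ) (dyadicSymbol φ) :=
    hφ.sub (hφ.comp (contDiff_const_smul 2))
  have hψ_supp : HasCompactSupport (dyadicSymbol φ) :=
    hφ_supp.sub (hφ_supp.comp_smul two_ne_zero)
  obtain ⟨C₀, hC₀, hlow⟩ := exists_enorm_fourierInv_mul_rpow_le_maximalFunction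
    (hdim ▸ hφ) hφ_supp (-(α / 2))
  obtain ⟨C₁, hC₁, hhigh⟩ := exists_enorm_fourierInv_rescaled_mul_rpow_le_maximalFunction
    (hdim ▸ hψ) hψ_supp (dyadicSymbol_eventuallyEq_zero hφ_one) (-(α / 2))
  refine ⟨max C₀ C₁, by finiteness, fun f g hgm hg hfg j x => ?_⟩
  rcases eq_or_ne j 0 with rfl | hj
  · simp only [LPblock_zero, hfg, ← mul_assoc, ← Complex.ofReal_mul, CharP.cast_eq_zero, neg_zero,
      zero_mul, Real.rpow_zero, ENNReal.ofReal_one, one_mul]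
    grw [hlow g hgm hg x, ← le_max_left]
  · have hexponent : ((2 : ℝ) ^ j) ^ (2 * -(α / 2)) = 2 ^ (-(j : ℝ) * α) := by
      rw [← Real.rpow_natCast, ← Real.rpow_mul zero_le_two]
      ring_nf
    simp only [LPblock_of_ne_zero φ hj, hfg, ← mul_assoc, ← Complex.ofReal_mul, ← hexponent]
    grw [hhigh (2 ^ j) (one_le_pow₀ one_le_two) g hgm hg x, ← le_max_right, mul_assoc]

theorem ae_enorm_LPblock_le_besovNorm (φ : EuclideanSpace ℝ (Fin d) → ℝ) {s : ℝ} (hs : s ≤ 0)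
    (f : EuclideanSpace ℝ (Fin d) → ℂ) :
    ∀ᵐ x, ∀ j : ℕ,
      ‖LPblock φ j f x‖ₑ ≤ ENNReal.ofReal (2 ^ ((j : ℝ) * -s)) * besovNorm φ s ⊤ f := by
  refine ae_all_iff.2 fun j => ?_
  filter_upwards [ae_le_eLpNormEssSup (f := LPblock φ j f) (μ := volume)] with x hx
  have hweight : 1 ≤ ENNReal.ofReal (2 ^ ((j : ℝ) * -s)) *
      ENNReal.ofReal ((2 : ℝ) ^ (((j : ℝ) - 1) * s)) := by
    rw [← ENNReal.ofReal_mul (by positivity), ← Real.rpow_add two_pos, ENNReal.one_le_ofReal]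
    exact Real.one_le_rpow one_le_two (by linarith)
  calc ‖LPblock φ j f x‖ₑ ≤ 1 * eLpNorm (LPblock φ j f) ⊤ volume := by
        rwa [one_mul, eLpNorm_exponent_top]
    _ ≤ ENNReal.ofReal (2 ^ ((j : ℝ) * -s)) * (ENNReal.ofReal ((2 : ℝ) ^ (((j : ℝ) - 1) * s)) *
          eLpNorm (LPblock φ j f) ⊤ volume) := by
        grw [hweight, mul_assoc]
    _ ≤ ENNReal.ofReal (2 ^ ((j : ℝ) * -s)) * besovNorm φ s ⊤ f := by
        gcongr
        exact le_iSup (fun j : ℕ => ENNReal.ofReal ((2 : ℝ) ^ (((j : ℝ) - 1) * s)) *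
          eLpNorm (LPblock φ j f) ⊤ volume) j

end LittlewoodPaley

section BesselPotential

variable {V : Type*} [NormedAddCommGroup V] [InnerProductSpace ℝ V] [FiniteDimensional ℝ V]
  [MeasurableSpace V] [BorelSpace V]

/-- The Bessel potential `(I - Δ)^{α/2} f` of a Schwartz function, the Schwartz counterpart of
`TemperedDistribution.besselPotential`. -/
noncomputable def schwartzBesselPotential (α : ℝ) (f : 𝓢(V, ℂ)) : 𝓢(V, ℂ) :=
  SchwartzMap.fourierMultiplierCLM ℂ (fun ξ => (((1 + ‖ξ‖ ^ 2) ^ (α / 2) : ℝ) : ℂ)) f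

theorem fourier_schwartzBesselPotential (α : ℝ) (f : 𝓢(V, ℂ)) (ξ : V) :
    𝓕 (schwartzBesselPotential α f : V → ℂ) ξ =
      (((1 + ‖ξ‖ ^ 2) ^ (α / 2) : ℝ) : ℂ) * 𝓕 (f : V → ℂ) ξ := by
  rw [← SchwartzMap.fourier_coe, schwartzBesselPotential, SchwartzMap.fourierMultiplierCLM_apply,
    FourierTransform.fourier_fourierInv_eq, SchwartzMap.smulLeftCLM_apply_apply (by fun_prop),
    smul_eq_mul, SchwartzMap.fourier_coe]

theorem fourier_eq_rpow_mul_fourier_schwartzBesselPotential (α : ℝ) (f : 𝓢(V, ℂ)) (ξ : V) :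
    𝓕 (f : V → ℂ) ξ = (((1 + ‖ξ‖ ^ 2) ^ (-(α / 2)) : ℝ) : ℂ) *
      𝓕 (schwartzBesselPotential α f : V → ℂ) ξ := by
  rw [fourier_schwartzBesselPotential, ← mul_assoc, ← Complex.ofReal_mul,
    ← Real.rpow_add (by positivity), neg_add_cancel, Real.rpow_zero, Complex.ofReal_one, one_mul]

theorem besselNorm_eq_eLpNorm_schwartzBesselPotential {d : ℕ} (α p : ℝ)
    (f : 𝓢(EuclideanSpace ℝ (Fin d), ℂ)) :
    besselNorm α p f = eLpNorm (schwartzBesselPotential α f) (ENNReal.ofReal p) volume := by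
  have hinversion := (schwartzBesselPotential α f).continuous.fourierInv_fourier_eq
    (schwartzBesselPotential α f).integrable (by
      simpa only [SchwartzMap.fourier_coe] using (𝓕 (schwartzBesselPotential α f)).integrable)
  rw [besselNorm, ← hinversion, funext (fourier_schwartzBesselPotential α f)]

end BesselPotential

section ImprovedSobolev

theorem eLpNorm_le_mul_eLpNorm_rpow_of_ae_le {Ω E : Type*} [MeasurableSpace Ω] {μ : Measure Ω}
    [NormedAddCommGroup E] {f : Ω → E} {M : Ω → ℝ≥0∞} (hM : AEMeasurable M μ) {c : ℝ≥0∞} {θ : ℝ}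
    (hθ : 0 < θ) (q : ℝ≥0∞) (hfM : ∀ᵐ x ∂μ, ‖f x‖ₑ ≤ c * M x ^ θ) :
    eLpNorm f q μ ≤ c * eLpNorm M (q * ENNReal.ofReal θ) μ ^ θ := by
  have hrpow : eLpNorm (M · ^ θ) q μ = eLpNorm M (q * ENNReal.ofReal θ) μ ^ θ :=
    eLpNorm_enorm_rpow M hθ
  rw [← hrpow]
  exact eLpNorm_le_mul_eLpNorm_of_ae_le_mul'' q (hM.pow_const θ).aestronglyMeasurable hfM

variable {d : ℕ} {α β : ℝ} {φ : EuclideanSpace ℝ (Fin d) → ℝ}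

theorem exists_ae_enorm_le_maximalFunction_rpow_mul_besovNorm_rpow (hα : 0 < α) (hαβ : α < β)
    (hφ : ContDiff ℝ (d + 1 : ℕ) φ) (hφ_supp : HasCompactSupport φ) (hφ_one : φ =ᶠ[𝓝 0] 1) :
    ∃ C : ℝ≥0∞, C ≠ ⊤ ∧ ∀ f : 𝓢(EuclideanSpace ℝ (Fin d), ℂ), ∀ᵐ x, ‖f x‖ₑ ≤
      C * besovNorm φ (α - β) ⊤ f ^ (α / β) *
        maximalFunction volume (‖schwartzBesselPotential α f ·‖ₑ) x ^ (1 - α / β) := by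
  have hθ : 0 ≤ 1 - α / β := sub_nonneg.2 (div_le_one_of_le₀ hαβ.le (hα.trans hαβ).le)
  obtain ⟨C₁, hC₁, hblock⟩ := exists_enorm_LPblock_le_maximalFunction hφ hφ_supp hφ_one α
  obtain ⟨C₂, hC₂, hsum⟩ := exists_tsum_le_of_le_two_rpow_mul hα hαβ
  refine ⟨C₂ * C₁ ^ (1 - α / β), by finiteness, fun f => ?_⟩
  have hFf : Integrable (𝓕 (f : EuclideanSpace ℝ (Fin d) → ℂ)) := by
    simpa only [SchwartzMap.fourier_coe] using (𝓕 f).integrable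
  filter_upwards [ae_enorm_LPblock_le_besovNorm φ (sub_nonpos.2 hαβ.le) f] with x hbesov
  simp only [neg_sub] at hbesov
  have hmaximal := hblock f _ (schwartzBesselPotential α f).continuous.measurable
    (schwartzBesselPotential α f).integrable
    (fourier_eq_rpow_mul_fourier_schwartzBesselPotential α f)
  grw [enorm_le_tsum_enorm_LPblock hφ.continuous hφ_supp hφ_one.eq_of_nhds f.continuous
    f.integrable hFf x, hsum _ _ _ (hmaximal · x) hbesov, ENNReal.mul_rpow_of_nonneg _ _ hθ]
  exact le_of_eq (by ring)

theorem stmt_11_general {p q : ℝ} (hα : 0 < α) (hαβ : α < β) (hp : 1 < p)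
    (hq : p / q = 1 - α / β) (hφ : ContDiff ℝ (d + 1 : ℕ) φ) (hφ_supp : HasCompactSupport φ)
    (hφ_one : φ =ᶠ[𝓝 0] 1) :
    ∃ C : ℝ, 0 < C ∧ ∀ f : 𝓢(EuclideanSpace ℝ (Fin d), ℂ),
      eLpNorm f (ENNReal.ofReal q) volume ≤ ENNReal.ofReal C * besselNorm α p f ^ (1 - α / β) *
        besovNorm φ (α - β) ⊤ f ^ (α / β) := by
  have hθ : 0 < 1 - α / β := sub_pos.2 ((div_lt_one (hα.trans hαβ)).2 hαβ)
  have hq0 : q ≠ 0 := by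
    rintro rfl
    simp [← hq] at hθ
  have hpq : ENNReal.ofReal q * ENNReal.ofReal (1 - α / β) = ENNReal.ofReal p := by
    rw [← ENNReal.ofReal_mul' hθ.le, ← hq, mul_div_cancel₀ p hq0]
  obtain ⟨C₁, hC₁, hpointwise⟩ :=
    exists_ae_enorm_le_maximalFunction_rpow_mul_besovNorm_rpow hα hαβ hφ hφ_supp hφ_one
  obtain ⟨C₂, hC₂, hmaximal⟩ := exists_eLpNorm_maximalFunction_le
    (addHaar_closedBall_five_mul_le (volume : Measure (EuclideanSpace ℝ (Fin d)))) hp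
  have hC : C₁ * C₂ ^ (1 - α / β) ≠ ⊤ := by finiteness
  refine ⟨(C₁ * C₂ ^ (1 - α / β)).toReal + 1, by positivity, fun f => ?_⟩
  have hgm := (schwartzBesselPotential α f).continuous.measurable.enorm
  grw [eLpNorm_le_mul_eLpNorm_rpow_of_ae_le (measurable_maximalFunction _).aemeasurable hθ _
    (hpointwise f), hpq, hmaximal _ hgm, eLpNorm_enorm,
    ← besselNorm_eq_eLpNorm_schwartzBesselPotential, ENNReal.mul_rpow_of_nonneg _ _ hθ.le]
  calc C₁ * besovNorm φ (α - β) ⊤ f ^ (α / β) *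
        (C₂ ^ (1 - α / β) * besselNorm α p f ^ (1 - α / β))
      = C₁ * C₂ ^ (1 - α / β) * besselNorm α p f ^ (1 - α / β) *
        besovNorm φ (α - β) ⊤ f ^ (α / β) := by ring
    _ ≤ _ := by
        gcongr
        exact (ENNReal.le_ofReal_iff_toReal_le hC (by positivity)).2 (by linarith)

end ImprovedSobolev

/-- Gérard–Meyer–Oru improved Sobolev inequality (nonhomogeneous version): for
`0 < α < β`, `1 < p < ∞` and `p/q = 1 - α/β`,
`‖f‖_{L^q} ≤ C ‖f‖_{W^{α,p}}^{1-α/β} ‖f‖_{B^{α-β,∞}_∞}^{α/β}`. -/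
theorem stmt_11 (d : ℕ) (hd : 0 < d) (α β p q : ℝ)
    (hα : 0 < α) (hαβ : α < β) (hp : 1 < p) (hq : p / q = 1 - α / β)
    (φ : EuclideanSpace ℝ (Fin d) → ℝ) (hφ_smooth : ContDiff ℝ (⊤ : ℕ∞) φ)
    (hφ_supp : HasCompactSupport φ) (hφ_one : ∀ ξ, ‖ξ‖ ≤ 1 → φ ξ = 1) :
    ∃ C : ℝ, 0 < C ∧ ∀ f : SchwartzMap (EuclideanSpace ℝ (Fin d)) ℂ,
      eLpNorm ⇑f (ENNReal.ofReal q) volume ≤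
        ENNReal.ofReal C * (besselNorm α p ⇑f) ^ (1 - α / β) *
          (besovNorm φ (α - β) ⊤ ⇑f) ^ (α / β) := by
  exact stmt_11_general hα hαβ hp hq (hφ_smooth.of_le (by exact_mod_cast le_top)) hφ_supp
    (eventually_of_mem (closedBall_mem_nhds 0 one_pos) fun ξ hξ =>
      hφ_one ξ (mem_closedBall_zero_iff.1 hξ))
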